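/- arXiv:2510.10631 — 3 statements merged into one kernel-verified Lean document; each statement's English description precedes it below -/
import Mathlib

section
/- Let p, q > 1 be real numbers and define f : ℝ → ℝ by f(x) = x · (log(1 + x^p))^q. Then for every x > 0, the second derivative of f at x is strictly positive: f''(x) > 0; in particular f is strictly convex on (0, ∞). -/
open Real

/-!
Write `u = x ^ p` and `L = log (1 + u)`, so that `x * L' = p * u / (1 + u)`. The factor `x` in `f`
therefore disappears from `f' = L ^ q + p * q * L ^ (q - 1) * (u / (1 + u))`, which is built from
the increasing functions `L` and `u / (1 + u)`; differentiating once more gives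
`f'' = p * q * x ^ (p - 1) / (1 + u) *
  (L ^ (q - 1) * (1 + p / (1 + u)) + p * (q - 1) * L ^ (q - 2) * (u / (1 + u)))`,
in which every summand is nonnegative and the first one is positive.
-/

/-- The log-power sharpening function `x ↦ x * (log (1 + x ^ p)) ^ q`, on all of `ℝ`; only its
values on `[0, ∞)` are meaningful. -/
noncomputable def logPowSharpen (p q x : ℝ) : ℝ :=
  x * log (1 + x ^ p) ^ q

section

variable {x : ℝ}

theorem log_one_add_rpow_pos (p : ℝ) (hx : 0 < x) : 0 < log (1 + x ^ p) :=
  log_pos (lt_add_of_pos_right 1 (rpow_pos_of_pos hx p))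

theorem hasDerivAt_one_add_rpow (p : ℝ) (hx : 0 < x) :
    HasDerivAt (fun y ↦ 1 + y ^ p) (p * x ^ (p - 1)) x :=
  (hasDerivAt_rpow_const (Or.inl hx.ne')).const_add 1

theorem hasDerivAt_rpow_log_one_add_rpow (p r : ℝ) (hx : 0 < x) :
    HasDerivAt (fun y ↦ log (1 + y ^ p) ^ r)
      (p * x ^ (p - 1) / (1 + x ^ p) * r * log (1 + x ^ p) ^ (r - 1)) x :=
  ((hasDerivAt_one_add_rpow p hx).log (by positivity)).rpow_const
    (Or.inl (log_one_add_rpow_pos p hx).ne')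

theorem hasDerivAt_rpow_div_one_add_rpow (p : ℝ) (hx : 0 < x) :
    HasDerivAt (fun y ↦ y ^ p / (1 + y ^ p)) (p * x ^ (p - 1) / (1 + x ^ p) ^ 2) x :=
  ((hasDerivAt_rpow_const (Or.inl hx.ne')).fun_div (hasDerivAt_one_add_rpow p hx)
    (by positivity)).congr_deriv (by ring)

theorem hasDerivAt_logPowSharpen (p q : ℝ) (hx : 0 < x) :
    HasDerivAt (logPowSharpen p q)
      (log (1 + x ^ p) ^ q + p * q * (log (1 + x ^ p) ^ (q - 1) * (x ^ p / (1 + x ^ p)))) x := by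
  have hxp : x * x ^ (p - 1) = x ^ p := by
    rw [mul_comm, rpow_sub_one hx.ne', div_mul_cancel₀ _ hx.ne']
  refine ((hasDerivAt_id' x).fun_mul (hasDerivAt_rpow_log_one_add_rpow p q hx)).congr_deriv ?_
  linear_combination p * q * log (1 + x ^ p) ^ (q - 1) / (1 + x ^ p) * hxp

theorem deriv_deriv_logPowSharpen (p q : ℝ) (hx : 0 < x) :
    deriv (deriv (logPowSharpen p q)) x =
      p * q * x ^ (p - 1) / (1 + x ^ p) *
        (log (1 + x ^ p) ^ (q - 1) * (1 + p / (1 + x ^ p)) +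
          p * (q - 1) * log (1 + x ^ p) ^ (q - 2) * (x ^ p / (1 + x ^ p))) := by
  have deriv_eq : deriv (logPowSharpen p q) =ᶠ[nhds x] fun y ↦
      log (1 + y ^ p) ^ q + p * q * (log (1 + y ^ p) ^ (q - 1) * (y ^ p / (1 + y ^ p))) := by
    filter_upwards [lt_mem_nhds hx] with y hy using (hasDerivAt_logPowSharpen p q hy).deriv
  have hasDerivAt_formula := (hasDerivAt_rpow_log_one_add_rpow p q hx).fun_add
    (((hasDerivAt_rpow_log_one_add_rpow p (q - 1) hx).fun_mul
      (hasDerivAt_rpow_div_one_add_rpow p hx)).const_mul (p * q))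
  rw [deriv_eq.deriv_eq, hasDerivAt_formula.deriv, show q - 1 - 1 = q - 2 by ring]
  field_simp
  ring

end

section

variable {p q : ℝ}

theorem deriv_deriv_logPowSharpen_pos (hp : 0 < p) (hq : 1 ≤ q) {x : ℝ} (hx : 0 < x) :
    0 < deriv (deriv (logPowSharpen p q)) x := by
  have hL : 0 < log (1 + x ^ p) := log_one_add_rpow_pos p hx
  have : 0 ≤ q - 1 := sub_nonneg.2 hq
  rw [deriv_deriv_logPowSharpen p q hx]
  positivity

theorem continuousOn_logPowSharpen (hp : 0 ≤ p) (hq : 0 ≤ q) :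
    ContinuousOn (logPowSharpen p q) (Set.Ici 0) := by
  have one_add_ne_zero : ∀ x ∈ Set.Ici (0 : ℝ), 1 + x ^ p ≠ 0 := fun x hx ↦
    (add_pos_of_pos_of_nonneg one_pos (rpow_nonneg hx p)).ne'
  have continuousOn_log : ContinuousOn (fun x : ℝ ↦ log (1 + x ^ p)) (Set.Ici 0) :=
    ((continuous_rpow_const hp).const_add 1).continuousOn.log one_add_ne_zero
  exact continuousOn_id.mul (continuousOn_log.rpow_const fun _ _ ↦ Or.inr hq)

theorem strictConvexOn_logPowSharpen (hp : 0 < p) (hq : 1 ≤ q) :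
    StrictConvexOn ℝ (Set.Ici 0) (logPowSharpen p q) := by
  refine strictConvexOn_of_deriv2_pos (convex_Ici 0)
    (continuousOn_logPowSharpen hp.le (zero_le_one.trans hq)) fun x hx ↦ ?_
  rw [interior_Ici] at hx
  exact deriv_deriv_logPowSharpen_pos hp hq hx

end

theorem logpow_second_deriv_pos_general (p q : ℝ) (hp : 0 < p) (hq : 1 ≤ q)
    (f : ℝ → ℝ) (hf : ∀ x : ℝ, f x = x * log (1 + x ^ p) ^ q) :
    (∀ x : ℝ, 0 < x → 0 < deriv (deriv f) x) ∧ StrictConvexOn ℝ (Set.Ici (0 : ℝ)) f := by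
  obtain rfl : f = logPowSharpen p q := funext hf
  exact ⟨fun _ ↦ deriv_deriv_logPowSharpen_pos hp hq, strictConvexOn_logPowSharpen hp hq⟩

/-- For `p, q > 1` and `f x = x * (log (1 + x^p))^q`, the second derivative of `f`
is strictly positive at every `x > 0`; in particular `f` is strictly convex on `(0, ∞)`. -/
theorem logpow_second_deriv_pos (p q : ℝ) (hp : 1 < p) (hq : 1 < q)
    (f : ℝ → ℝ) (hf : ∀ x : ℝ, f x = x * (Real.log (1 + x ^ p)) ^ q) :
    (∀ x : ℝ, 0 < x → 0 < deriv (deriv f) x) ∧ StrictConvexOn ℝ (Set.Ioi (0 : ℝ)) f :=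
  (logpow_second_deriv_pos_general p q (one_pos.trans hp) hq.le f hf).imp_right
    fun h ↦ h.subset Set.Ioi_subset_Ici_self (convex_Ioi 0)
end

section
/- Let p, q > 1 be real numbers and define f : ℝ → ℝ by f(x) = x · (log(1 + x^p))^q. Then the ratio f'(x) / (p · log x)^q tends to 1 as x → ∞. -/
open Real Filter
open scoped Topology Asymptotics

/-!
If `g` is slowly varying, in the sense that `x * g'(x) / g(x) → 0`, then
`(x * g(x) ^ q)' = g(x) ^ q * (1 + q * (x * g'(x) / g(x)))` is equivalent to `g(x) ^ q`. The
logarithm of any function `u → ∞` for which `x * u'(x) / u(x)` converges is slowly varying, because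
`x * (log u)' / log u = (x * u' / u) / log u`. For `u = c + x ^ p` the quotient `x * u' / u`
converges to `p`, and `log u` is equivalent to `p * log x`.
-/

theorem isEquivalent_rpow_of_eventually_nonneg {α : Type*} {l : Filter α} {u v : α → ℝ}
    (h : u ~[l] v) (hv : ∀ᶠ x in l, 0 ≤ v x) (q : ℝ) :
    (fun x => u x ^ q) ~[l] fun x => v x ^ q := by
  have hmax : (fun x => max (v x) 0) =ᶠ[l] v := hv.mono fun _ => max_eq_left
  exact ((h.congr_right hmax.symm).rpow fun _ => le_max_right _ _).congr_right
    (hmax.mono fun _ hx => congrArg (· ^ q) hx)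

theorem deriv_id_mul_rpow {g : ℝ → ℝ} {x : ℝ} (hg : DifferentiableAt ℝ g x) (hgx : g x ≠ 0)
    (q : ℝ) :
    deriv (fun y => y * g y ^ q) x = g x ^ q * (1 + q * (x * logDeriv g x)) := by
  have hpow : HasDerivAt (fun y => g y ^ q) (deriv g x * q * g x ^ (q - 1)) x :=
    hg.hasDerivAt.rpow_const (Or.inl hgx)
  rw [((hasDerivAt_id' x).fun_mul hpow).deriv, rpow_sub_one hgx, logDeriv_apply]
  ring

theorem isEquivalent_deriv_id_mul_rpow {l : Filter ℝ} {g : ℝ → ℝ}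
    (hg : ∀ᶠ x in l, DifferentiableAt ℝ g x) (hg_ne : ∀ᶠ x in l, g x ≠ 0)
    (hslow : Tendsto (fun x => x * logDeriv g x) l (𝓝 0)) (q : ℝ) :
    deriv (fun x => x * g x ^ q) ~[l] fun x => g x ^ q := by
  have hfactor : Tendsto (fun x => 1 + q * (x * logDeriv g x)) l (𝓝 1) := by
    simpa using (hslow.const_mul q).const_add 1
  refine Asymptotics.isEquivalent_iff_exists_eq_mul.mpr ⟨_, hfactor, ?_⟩
  filter_upwards [hg, hg_ne] with x hgx hgx_ne
  rw [deriv_id_mul_rpow hgx hgx_ne, Pi.mul_apply, mul_comm]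

theorem tendsto_mul_logDeriv_log {l : Filter ℝ} {u : ℝ → ℝ} {c : ℝ}
    (hu : ∀ᶠ x in l, DifferentiableAt ℝ u x) (hu_top : Tendsto u l atTop)
    (hc : Tendsto (fun x => x * logDeriv u x) l (𝓝 c)) :
    Tendsto (fun x => x * logDeriv (fun y => log (u y)) x) l (𝓝 0) := by
  refine (hc.div_atTop (tendsto_log_atTop.comp hu_top)).congr' ?_
  filter_upwards [hu, hu_top.eventually_ne_atTop 0] with x hux hux_ne
  rw [logDeriv_apply (fun y => log (u y)), deriv.log hux hux_ne, ← logDeriv_apply, mul_div_assoc,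
    Function.comp_apply]

section ConstAddRpow

variable (c : ℝ) {p : ℝ}

theorem differentiableAt_const_add_rpow {x : ℝ} (hx : x ≠ 0) :
    DifferentiableAt ℝ (fun y => c + y ^ p) x :=
  (differentiableAt_rpow_const_of_ne p hx).const_add c

theorem isEquivalent_const_add_rpow (hp : 0 < p) :
    (fun x : ℝ => c + x ^ p) ~[atTop] fun x => x ^ p :=
  Asymptotics.IsEquivalent.refl.const_add_of_norm_tendsto_atTop
    (tendsto_norm_atTop_atTop.comp (tendsto_rpow_atTop hp))

theorem tendsto_const_add_rpow_atTop (hp : 0 < p) :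
    Tendsto (fun x : ℝ => c + x ^ p) atTop atTop :=
  tendsto_atTop_add_const_left _ c (tendsto_rpow_atTop hp)

theorem isEquivalent_log_const_add_rpow (hp : 0 < p) :
    (fun x : ℝ => log (c + x ^ p)) ~[atTop] fun x => p * log x := by
  refine ((isEquivalent_const_add_rpow c hp).log (tendsto_rpow_atTop hp)).congr_right ?_
  filter_upwards [eventually_gt_atTop 0] with x hx using log_rpow hx p

theorem tendsto_mul_logDeriv_const_add_rpow (hp : 0 < p) :
    Tendsto (fun x : ℝ => x * logDeriv (fun y => c + y ^ p) x) atTop (𝓝 p) := by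
  have hpow_ne : ∀ᶠ x : ℝ in atTop, c + x ^ p ≠ 0 :=
    (tendsto_const_add_rpow_atTop c hp).eventually_ne_atTop 0
  have hratio : Tendsto (fun x : ℝ => x ^ p / (c + x ^ p)) atTop (𝓝 1) :=
    (Asymptotics.isEquivalent_iff_tendsto_one hpow_ne).mp (isEquivalent_const_add_rpow c hp).symm
  have hlim : Tendsto (fun x : ℝ => p * (x ^ p / (c + x ^ p))) atTop (𝓝 p) := by
    simpa using hratio.const_mul p
  refine hlim.congr' ?_
  filter_upwards [eventually_ne_atTop 0] with x hx
  rw [logDeriv_apply, deriv_const_add, Real.deriv_rpow_const, rpow_sub_one hx]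
  field_simp

theorem logpow_deriv_ratio_tendsto_one_general (hp : 0 < p) (q : ℝ) :
    Tendsto (fun x : ℝ => deriv (fun y => y * log (c + y ^ p) ^ q) x / (p * log x) ^ q)
      atTop (𝓝 1) := by
  have hdiff : ∀ᶠ x in atTop, DifferentiableAt ℝ (fun y => c + y ^ p) x :=
    (eventually_ne_atTop 0).mono fun _ hx => differentiableAt_const_add_rpow c hx
  have htop := tendsto_const_add_rpow_atTop c hp
  have hlog_ne : ∀ᶠ x : ℝ in atTop, log (c + x ^ p) ≠ 0 :=
    (tendsto_log_atTop.comp htop).eventually_ne_atTop 0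
  have hlog_diff : ∀ᶠ x in atTop, DifferentiableAt ℝ (fun y => log (c + y ^ p)) x := by
    filter_upwards [hdiff, htop.eventually_ne_atTop 0] with x hx hx_ne using hx.log hx_ne
  have hslow := tendsto_mul_logDeriv_log hdiff htop (tendsto_mul_logDeriv_const_add_rpow c hp)
  have hpos : ∀ᶠ x : ℝ in atTop, 0 < p * log x :=
    (tendsto_log_atTop.const_mul_atTop hp).eventually_gt_atTop 0
  have hequiv : deriv (fun x => x * log (c + x ^ p) ^ q) ~[atTop] fun x => (p * log x) ^ q :=
    (isEquivalent_deriv_id_mul_rpow hlog_diff hlog_ne hslow q).trans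
      (isEquivalent_rpow_of_eventually_nonneg (isEquivalent_log_const_add_rpow c hp)
        (hpos.mono fun _ => le_of_lt) q)
  exact (Asymptotics.isEquivalent_iff_tendsto_one
    (hpos.mono fun _ hx => (rpow_pos_of_pos hx q).ne')).mp hequiv

end ConstAddRpow

/-- For `p, q > 1` and `f x = x * (log (1 + x^p))^q`, the ratio
`f'(x) / (p * log x)^q` tends to `1` as `x → ∞`. -/
theorem logpow_deriv_ratio_tendsto_one (p q : ℝ) (hp : 1 < p) (hq : 1 < q)
    (f : ℝ → ℝ) (hf : ∀ x : ℝ, f x = x * (Real.log (1 + x ^ p)) ^ q) :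
    Filter.Tendsto (fun x : ℝ => deriv f x / (p * Real.log x) ^ q)
      Filter.atTop (nhds 1) := by
  rw [funext hf]
  exact logpow_deriv_ratio_tendsto_one_general 1 (zero_lt_one.trans hp) q
end

section
/- Define h : ℝ → ℝ by h(x) = log(x + 1) − (x / (x + 1)) · log x. Then h is strictly decreasing on the interval (1, ∞): for all x, y with 1 < x < y, h(y) < h(x). -/
open Real

/-!
The value `h x` is the Shannon entropy of the two-point distribution with weights proportional
to `x` and `1`, that is, `binEntropy (x / (x + 1))`. As `x` increases from `1`, the larger
probability `x / (x + 1)` increases from `1 / 2`, where binary entropy is maximal, towards `1`,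
and binary entropy is strictly decreasing on `[1 / 2, 1]`.
-/

theorem negMulLog_div (x y : ℝ) :
    negMulLog (x / y) = (negMulLog x + x * log y) / y := by
  rw [div_eq_mul_inv, negMulLog_mul]
  simp only [negMulLog, log_inv]
  ring

theorem binEntropy_div_add {a b : ℝ} (hab : a + b ≠ 0) :
    binEntropy (a / (a + b)) = log (a + b) + (negMulLog a + negMulLog b) / (a + b) := by
  have one_sub_div_add : 1 - a / (a + b) = b / (a + b) := by
    rw [one_sub_div hab, add_sub_cancel_left]
  rw [binEntropy_eq_negMulLog_add_negMulLog_one_sub, one_sub_div_add, negMulLog_div, negMulLog_div]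
  field_simp
  ring

theorem strictMonoOn_div_add_const {c : ℝ} (hc : 0 < c) :
    StrictMonoOn (fun x ↦ x / (x + c)) (Set.Ioi (-c)) := by
  intro x hx y hy hxy
  have hx' : 0 < x + c := neg_lt_iff_pos_add.mp hx
  have hy' : 0 < y + c := neg_lt_iff_pos_add.mp hy
  rw [div_lt_div_iff₀ hx' hy']
  linarith [mul_lt_mul_of_pos_right hxy hc]

theorem mapsTo_div_add_const_Ici_Icc {c : ℝ} (hc : 0 < c) :
    Set.MapsTo (fun x ↦ x / (x + c)) (Set.Ici c) (Set.Icc 2⁻¹ 1) := by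
  intro x (hx : c ≤ x)
  have hxc : 0 < x + c := by linarith
  constructor
  · rw [le_div_iff₀ hxc]
    linarith
  · rw [div_le_one hxc]
    linarith

theorem strictAntiOn_binEntropy_div_add_const {c : ℝ} (hc : 0 < c) :
    StrictAntiOn (fun x ↦ binEntropy (x / (x + c))) (Set.Ici c) :=
  have Ici_subset : Set.Ici c ⊆ Set.Ioi (-c) := Set.Ici_subset_Ioi.mpr (neg_lt_self hc)
  binEntropy_strictAntiOn.comp_strictMonoOn ((strictMonoOn_div_add_const hc).mono Ici_subset)
    (mapsTo_div_add_const_Ici_Icc hc)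

/-- The function `h x = log (x + 1) - (x / (x + 1)) * log x` is strictly decreasing on
`(1, ∞)`: for all `x, y` with `1 < x < y`, `h y < h x`. -/
theorem entropy_ratio_strictAnti (h : ℝ → ℝ)
    (hh : ∀ x : ℝ, h x = Real.log (x + 1) - (x / (x + 1)) * Real.log x) :
    ∀ x y : ℝ, 1 < x → x < y → h y < h x := by
  intro x y hx hxy
  have h_eq_binEntropy {t : ℝ} (ht : 1 < t) : h t = binEntropy (t / (t + 1)) := by
    rw [hh, binEntropy_div_add (by linarith), negMulLog_one, negMulLog]
    ring
  have hy : 1 < y := hx.trans hxy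
  rw [h_eq_binEntropy hx, h_eq_binEntropy hy]
  exact strictAntiOn_binEntropy_div_add_const one_pos hx.le hy.le hxy
end
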